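/- Fix n ≥ 1, ε ≥ 0, and δ ≥ 0. For every randomized algorithm A : (Fin n × {0,1} → ℝ) → PMF({0,1}^n) that is (ε,δ)-differentially private with respect to ℓ1-neighboring weight functions, there exists a weight function w : Fin n × {0,1} → {0,1} such that the expected approximation error of the spanning tree released by A satisfies E_{y ← A(w)}[T_w(y)] − min_{z ∈ {0,1}^n} T_w(z) ≥ n · (1 − (1+e^ε)δ) / (1 + e^{2ε}). -/

import Mathlib

/-!
The hard instances are the `2^n` weight functions `codeWeight x`, `x ∈ {0,1}^n`, for which the
error of a tree `y` is the Hamming distance between `x` and `y`; the expected error is then the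
sum over `i` of the probability `bitError A x i` that the output misses the bit `x i`.

Flipping the bit `i` of `x` changes the weights by `2` in `ℓ1`, so privacy is used twice, through
a common neighbor (`exists_common_neighbor`). As a correct bit for `x` is an error for the
flipped string `x'`, this gives (`one_sub_bitError_le`)
`1 - bitError A x i ≤ e^{2ε} * bitError A x' i + (1 + e^ε) δ`.
Summing over all `x` and using that the flip is a bijection bounds the average of `bitError A x i`
below by `(1 - (1 + e^ε) δ) / (1 + e^{2ε})` (`le_sum_bitError`). Summing over `i`, some `x` is at
least as bad as the average.
-/

open scoped ENNReal NNReal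

/-- The probability that a sample from `p` lands in the set `S`. -/
noncomputable def prob {Y : Type*} (p : PMF Y) (S : Set Y) : ℝ≥0∞ :=
  p.toOuterMeasure S

/-- `A` is `(ε,δ)`-differentially private with respect to the neighboring relation `N`. -/
def IsDP {X Y : Type*} (N : X → X → Prop) (A : X → PMF Y) (ε δ : ℝ) : Prop :=
  ∀ x x', N x x' → ∀ S : Set Y,
    prob (A x) S ≤ ENNReal.ofReal (Real.exp ε) * prob (A x') S + ENNReal.ofReal δ

/-- The expected value of `f` under the distribution `p` (finite output space). -/
noncomputable def expVal {Y : Type*} [Fintype Y] (p : PMF Y) (f : Y → ℝ) : ℝ :=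
  ∑ y, (p y).toReal * f y

/-- Two real-valued weight functions on the edges of the star lower-bound graph are
neighboring if their `ℓ1` distance is at most `1`. -/
def L1NeighborR {ι : Type*} [Fintype ι] (w w' : ι → ℝ) : Prop :=
  ∑ i, |w i - w' i| ≤ 1

/-- The weight of the spanning tree encoded by `y : Fin n → Bool` in the star lower-bound
graph: tree `y` uses edge `e_i^{(y_i)}` between the center and outer vertex `i`. -/
def Tw {n : ℕ} (w : Fin n × Bool → ℝ) (y : Fin n → Bool) : ℝ :=
  ∑ i, w (i, y i)

/-- The `{0,1}`-valued weight function whose unique minimum spanning tree is `x`: the edge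
`e_i^{(b)}` costs `1` exactly when `b ≠ x i`, so the weight of the tree `y` is the Hamming
distance between `x` and `y`. -/
noncomputable def codeWeight {n : ℕ} (x : Fin n → Bool) : Fin n × Bool → ℝ :=
  fun p => if p.2 = x p.1 then 0 else 1

/-- The string `x` with its `i`-th bit negated. -/
def flipBit {n : ℕ} (i : Fin n) (x : Fin n → Bool) : Fin n → Bool :=
  Function.update x i (!x i)

lemma flipBit_involutive {n : ℕ} (i : Fin n) : Function.Involutive (flipBit i) := by
  intro x
  simp [flipBit]

lemma l1NeighborR_symm {ι : Type*} [Fintype ι] {w w' : ι → ℝ} (h : L1NeighborR w w') :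
    L1NeighborR w' w := by
  simpa only [L1NeighborR, abs_sub_comm] using h

lemma l1NeighborR_update {ι : Type*} [Fintype ι] [DecidableEq ι] (w : ι → ℝ) (p : ι) (c : ℝ)
    (h : |w p - c| ≤ 1) : L1NeighborR w (Function.update w p c) := by
  unfold L1NeighborR
  rw [Finset.sum_eq_single p]
  · simpa using h
  · intro b _ hb
    simp [Function.update_of_ne hb]
  · simp

/-- The two code weights at flipped strings have `ℓ1` distance `2`; making both edges to `i`
free gives a common neighbor. -/
lemma exists_common_neighbor {n : ℕ} (i : Fin n) (x : Fin n → Bool) :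
    ∃ m, L1NeighborR (codeWeight x) m ∧ L1NeighborR m (codeWeight (flipBit i x)) := by
  refine ⟨Function.update (codeWeight x) (i, !x i) 0,
    l1NeighborR_update _ _ _ (by simp [codeWeight]), ?_⟩
  have h : Function.update (codeWeight x) (i, !x i) 0
      = Function.update (codeWeight (flipBit i x)) (i, x i) 0 := by
    funext ⟨j, b⟩
    by_cases hj : j = i
    · subst hj
      cases b <;> cases hx : x j <;> simp [codeWeight, flipBit, hx]
    · simp [codeWeight, flipBit, hj]
  rw [h]
  exact l1NeighborR_symm (l1NeighborR_update _ _ _ (by simp [codeWeight, flipBit]))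

lemma prob_ne_top {Y : Type*} (p : PMF Y) (S : Set Y) : prob p S ≠ ⊤ :=
  ne_top_of_le_ne_top ENNReal.one_ne_top <| by
    rw [prob, PMF.toOuterMeasure_apply, ← p.tsum_coe]
    exact ENNReal.tsum_le_tsum fun y => Set.indicator_le_self S p y

lemma prob_toReal {Y : Type*} [Fintype Y] (p : PMF Y) (S : Set Y) [DecidablePred (· ∈ S)] :
    (prob p S).toReal = ∑ y, (p y).toReal * (if y ∈ S then 1 else 0) := by
  classical
  rw [prob, PMF.toOuterMeasure_apply_fintype, ENNReal.toReal_sum]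
  · refine Finset.sum_congr rfl fun y _ => ?_
    by_cases h : y ∈ S <;> simp [h]
  · intro y _
    by_cases h : y ∈ S <;> simp [h, p.apply_ne_top]

lemma sum_toReal {Y : Type*} [Fintype Y] (p : PMF Y) : ∑ y, (p y).toReal = 1 := by
  have h := p.tsum_coe
  rw [tsum_fintype] at h
  rw [← ENNReal.toReal_sum fun y _ => p.apply_ne_top y, h, ENNReal.toReal_one]

lemma IsDP.toReal_le {X Y : Type*} {N : X → X → Prop} {A : X → PMF Y} {ε δ : ℝ}
    (h : IsDP N A ε δ) (hδ : 0 ≤ δ) {x x' : X} (hN : N x x') (S : Set Y) :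
    (prob (A x) S).toReal ≤ Real.exp ε * (prob (A x') S).toReal + δ := by
  have hne := ENNReal.mul_ne_top (ENNReal.ofReal_ne_top (r := Real.exp ε)) (prob_ne_top (A x') S)
  have h1 := ENNReal.toReal_mono (ENNReal.add_ne_top.2 ⟨hne, ENNReal.ofReal_ne_top⟩)
    (h x x' hN S)
  rwa [ENNReal.toReal_add hne ENNReal.ofReal_ne_top, ENNReal.toReal_mul,
    ENNReal.toReal_ofReal (Real.exp_nonneg ε), ENNReal.toReal_ofReal hδ] at h1

/-- The probability that the output of `A` on the code weight of `x` disagrees with `x` in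
the bit `i`. -/
noncomputable def bitError {n : ℕ} (A : (Fin n × Bool → ℝ) → PMF (Fin n → Bool))
    (x : Fin n → Bool) (i : Fin n) : ℝ :=
  (prob (A (codeWeight x)) {y | y i ≠ x i}).toReal

/-- Two privacy steps through the common neighbor: guessing bit `i` of `x` correctly is an
error for the flipped string. -/
lemma one_sub_bitError_le {n : ℕ} {ε δ : ℝ} (hδ : 0 ≤ δ)
    {A : (Fin n × Bool → ℝ) → PMF (Fin n → Bool)} (hDP : IsDP L1NeighborR A ε δ)
    (x : Fin n → Bool) (i : Fin n) :
    1 - bitError A x i ≤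
      Real.exp (2 * ε) * bitError A (flipBit i x) i + (1 + Real.exp ε) * δ := by
  obtain ⟨m, h1, h2⟩ := exists_common_neighbor i x
  have hset : {y : Fin n → Bool | y i ≠ flipBit i x i} = {y | y i = x i} := by
    ext y
    simp [flipBit]
  have hcompl : 1 - bitError A x i = (prob (A (codeWeight x)) {y | y i = x i}).toReal := by
    rw [bitError, prob_toReal, prob_toReal, sub_eq_iff_eq_add, ← Finset.sum_add_distrib]
    refine (sum_toReal (A (codeWeight x))).symm.trans (Finset.sum_congr rfl fun y _ => ?_)
    by_cases h : y i = x i <;> simp [h]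
  have e1 := hDP.toReal_le hδ h1 {y | y i = x i}
  have e2 := hDP.toReal_le hδ h2 {y | y i = x i}
  have e3 := mul_le_mul_of_nonneg_left e2 (Real.exp_nonneg ε)
  rw [hcompl, bitError, hset, two_mul ε, Real.exp_add]
  linarith

lemma expVal_codeWeight {n : ℕ} (A : (Fin n × Bool → ℝ) → PMF (Fin n → Bool))
    (x : Fin n → Bool) :
    expVal (A (codeWeight x)) (Tw (codeWeight x)) = ∑ i, bitError A x i := by
  simp only [expVal, Tw, bitError, prob_toReal, Finset.mul_sum]
  rw [Finset.sum_comm]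
  refine Finset.sum_congr rfl fun i _ => Finset.sum_congr rfl fun y _ => ?_
  by_cases h : y i = x i <;> simp [codeWeight, h]

lemma iInf_Tw_codeWeight_le {n : ℕ} (x : Fin n → Bool) :
    ⨅ z : Fin n → Bool, Tw (codeWeight x) z ≤ 0 :=
  (ciInf_le (Set.finite_range _).bddBelow x).trans_eq (by simp [Tw, codeWeight])

/-- For each bit, the error probability averaged over all strings is at least the claimed
per-bit bound: the error probabilities at `x` and at `flipBit i x` have the same sum over all
strings `x`, since flipping a bit is a bijection. -/
lemma le_sum_bitError {n : ℕ} {ε δ : ℝ} (hδ : 0 ≤ δ)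
    {A : (Fin n × Bool → ℝ) → PMF (Fin n → Bool)} (hDP : IsDP L1NeighborR A ε δ) (i : Fin n) :
    ∑ _x : Fin n → Bool, (1 - (1 + Real.exp ε) * δ) / (1 + Real.exp (2 * ε)) ≤
      ∑ x, bitError A x i := by
  have hflip : ∑ x, bitError A (flipBit i x) i = ∑ x, bitError A x i :=
    Equiv.sum_comp (flipBit_involutive i).toPerm fun x => bitError A x i
  have h := Finset.sum_le_sum fun x (_ : x ∈ Finset.univ) => one_sub_bitError_le hδ hDP x i
  rw [Finset.sum_sub_distrib, Finset.sum_add_distrib, ← Finset.mul_sum, hflip] at h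
  rw [← Finset.sum_div, Finset.sum_sub_distrib, div_le_iff₀ (by positivity)]
  linarith

/-- **Lower bound for private minimum spanning trees.**  Any `(ε,δ)`-differentially private
algorithm releasing a spanning tree of the star lower-bound graph has, on some `{0,1}`-valued
weight function, expected approximation error at least `n·(1-(1+e^ε)δ)/(1+e^{2ε})`. -/
theorem mst_lower_bound (n : ℕ) (hn : 1 ≤ n) (ε δ : ℝ) (hε : 0 ≤ ε) (hδ : 0 ≤ δ)
    (A : (Fin n × Bool → ℝ) → PMF (Fin n → Bool))
    (hDP : IsDP L1NeighborR A ε δ) :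
    ∃ w : Fin n × Bool → ℝ, (∀ p, w p = 0 ∨ w p = 1) ∧
      (n : ℝ) * (1 - (1 + Real.exp ε) * δ) / (1 + Real.exp (2 * ε)) ≤
        expVal (A w) (Tw w) - ⨅ z : Fin n → Bool, Tw w z := by
  have hsum : ∑ _x : Fin n → Bool,
      (n : ℝ) * (1 - (1 + Real.exp ε) * δ) / (1 + Real.exp (2 * ε)) ≤
        ∑ x, ∑ i, bitError A x i := by
    rw [Finset.sum_comm]
    refine le_trans (le_of_eq ?_)
      (Finset.sum_le_sum fun i (_ : i ∈ Finset.univ) => le_sum_bitError hδ hDP i)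
    simp only [Finset.sum_const, Finset.card_univ, Fintype.card_fin, nsmul_eq_mul]
    ring
  obtain ⟨x, -, hx⟩ := Finset.exists_le_of_sum_le Finset.univ_nonempty hsum
  refine ⟨codeWeight x, fun p => ?_, ?_⟩
  · unfold codeWeight
    split_ifs <;> simp
  · rw [expVal_codeWeight]
    linarith [iInf_Tw_codeWeight_le x]
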